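/- Let λ < 0, let n be an integer with 2 ≤ n ≤ 4, and let μ₁ ∈ ℝ. Then there exists a constant L ≥ -(n-1)/λ and a unique function h ∈ C²((0,L)) ∩ C¹([0,L)) satisfying 2r²h(r)h''(r) = (n-1)h(r)(h(r)-1) + r h'(r)(r h'(r) - λr - (n-1)) with h(r) > 0 on (0,L), together with h(0) = 1 and h'(0) = μ₁. -/

import Mathlib

open Set Filter Topology

/-- `h` is a solution of
`2r²h h'' = (n-1)h(h-1) + r h'(r h' - λr - (n-1))`, `h > 0` on `(0,L)`,
with `h ∈ C²((0,L)) ∩ C¹([0,L))`, `h(0) = 1` and `h'(0) = μ₁`. -/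
def IsSolOn (n : ℕ) (lam μ₁ L : ℝ) (h : ℝ → ℝ) : Prop :=
  ContDiffOn ℝ 2 h (Set.Ioo 0 L) ∧ ContDiffOn ℝ 1 h (Set.Ico 0 L) ∧
  (∀ r ∈ Set.Ioo (0 : ℝ) L,
    2 * r ^ 2 * h r * deriv (deriv h) r =
      ((n : ℝ) - 1) * h r * (h r - 1) +
        r * deriv h r * (r * deriv h r - lam * r - ((n : ℝ) - 1)) ∧ 0 < h r) ∧
  h 0 = 1 ∧ derivWithin h (Set.Ici 0) 0 = μ₁



lemma exp_int_bound (A r : ℝ) (hA : 0 < A) : ∫ ρ in (0:ℝ)..r, Real.exp (A*ρ) ≤ Real.exp (A*r)/A := by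
  have : ∫ ρ in (0:ℝ)..r, Real.exp (A*ρ) = Real.exp (A*r)/A - Real.exp (A*0)/A := by
    apply intervalIntegral.integral_eq_sub_of_hasDerivAt (f := fun ρ => Real.exp (A*ρ)/A)
    · intro x _
      have h := (((hasDerivAt_id x).const_mul A).exp).div_const A
      refine h.congr_deriv ?_
      simp only [id]; field_simp
    · apply Continuous.intervalIntegrable; fun_prop
  rw [this]
  have : 0 ≤ Real.exp (A*0)/A := by positivity
  linarith

lemma exist_lip (κ R μ K B : ℝ) (hκ : 1 ≤ κ) (hR : 0 < R) (hK : 0 ≤ K) (G : ℝ → ℝ → ℝ → ℝ)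
    (hG : Continuous fun x : ℝ × ℝ × ℝ => G x.1 x.2.1 x.2.2) (hb : ∀ r v d, |G r v d| ≤ B)
    (hL : ∀ r ∈ Icc 0 R, ∀ v d v' d', |G r v d - G r v' d'| ≤ K * (|v - v'| + |d - d'|)) :
    ∃ v d : ℝ → ℝ, Continuous v ∧ Continuous d ∧ v 0 = μ ∧ d 0 = 0 ∧
      ∀ r ∈ Ioo 0 R, HasDerivAt v (G r (v r) (d r) / κ) r ∧
        HasDerivAt d (-κ / r * d r + G r (v r) (d r)) r := by
  have hκ0 : 0 < κ := by linarith
  obtain ⟨A, hA, hAK⟩ : ∃ A : ℝ, 0 < A ∧ K * 2 / A ≤ 1/2 := by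
    refine ⟨4*K+1, by linarith, ?_⟩
    rw [div_le_iff₀ (by linarith)]; linarith
  let c : ℝ → ℝ := fun r => max 0 (min R r)
  have hcc : Continuous c := by fun_prop
  have hc : ∀ r, c r ∈ Icc 0 R := fun r => ⟨le_max_left _ _, max_le hR.le (min_le_left _ _)⟩
  have hceq : ∀ r ∈ Icc 0 R, c r = r := by
    intro r hr; simp [c, hr.1, hr.2]
  let z : (ℝ → ℝ) → ℝ → ℝ := fun w ρ => Real.exp (A*ρ) * w ρ
  have hz : ∀ w : ℝ → ℝ, Continuous w → Continuous (z w) := fun w hw => by fun_prop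
  let V : (ℝ → ℝ) → ℝ → ℝ := fun w r => μ + (∫ ρ in (0:ℝ)..r, z w ρ)/κ
  let D : (ℝ → ℝ) → ℝ → ℝ := fun w r => r * ∫ s in (0:ℝ)..1, s^κ * z w (r*s)
  have hpow : Continuous fun s : ℝ => s ^ κ := Real.continuous_rpow_const hκ0.le
  have hV : ∀ w : ℝ → ℝ, Continuous w → Continuous (V w) := by
    intro w hw
    have h1 : Continuous fun r => ∫ ρ in (0:ℝ)..r, z w ρ :=
      intervalIntegral.continuous_primitive (fun a b => (hz w hw).intervalIntegrable a b) 0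
    exact continuous_const.add (h1.div_const κ)
  have hD : ∀ w : ℝ → ℝ, Continuous w → Continuous (D w) := by
    intro w hw
    have h1 : Continuous fun r => ∫ s in (0:ℝ)..1, s^κ * z w (r*s) := by
      apply intervalIntegral.continuous_parametric_intervalIntegral_of_continuous'
      have := hz w hw
      exact (hpow.comp continuous_snd).mul (this.comp (continuous_fst.mul continuous_snd))
    exact continuous_id.mul h1
  let S0 : (ℝ → ℝ) → ℝ → ℝ := fun w r => Real.exp (-(A * c r)) * G (c r) (V w (c r)) (D w (c r))
  have hS0 : ∀ w : ℝ → ℝ, Continuous w → Continuous (S0 w) := by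
    intro w hw
    have h1 : Continuous fun r => G (c r) (V w (c r)) (D w (c r)) :=
      hG.comp (hcc.prodMk (((hV w hw).comp hcc).prodMk ((hD w hw).comp hcc)))
    have h2 : Continuous fun r => Real.exp (-(A * c r)) := by fun_prop
    exact h2.mul h1
  have hS0b : ∀ w r, ‖S0 w r‖ ≤ B := by
    intro w r
    rw [Real.norm_eq_abs, abs_mul, Real.abs_exp]
    have h1 : Real.exp (-(A * c r)) ≤ 1 := by
      rw [Real.exp_le_one_iff]
      have := mul_nonneg hA.le (hc r).1
      linarith
    have := hb (c r) (V w (c r)) (D w (c r))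
    nlinarith [abs_nonneg (G (c r) (V w (c r)) (D w (c r)))]
  let S : BoundedContinuousFunction ℝ ℝ → BoundedContinuousFunction ℝ ℝ := fun w =>
    BoundedContinuousFunction.ofNormedAddCommGroup (S0 w) (hS0 w w.continuous) B (hS0b w)
  have hSc : ContractingWith (1/2) S := by
    refine ⟨by norm_num, LipschitzWith.of_dist_le_mul ?_⟩
    intro w w'
    rw [BoundedContinuousFunction.dist_le (by positivity)]
    intro r
    set δ := dist w w' with hδ
    have hδ0 : 0 ≤ δ := dist_nonneg
    have hzd : ∀ ρ, |z w ρ - z w' ρ| ≤ δ * Real.exp (A*ρ) := by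
      intro ρ
      have : z w ρ - z w' ρ = Real.exp (A*ρ) * (w ρ - w' ρ) := by simp only [z]; ring
      rw [this, abs_mul, Real.abs_exp, mul_comm]
      gcongr
      exact BoundedContinuousFunction.dist_coe_le_dist (f := w) (g := w') ρ
    set t := c r with ht
    have ht0 : 0 ≤ t := (hc r).1
    have hVd : |V w t - V w' t| ≤ δ * (Real.exp (A*t)/A) := by
      have e1 : V w t - V w' t = (∫ ρ in (0:ℝ)..t, (z w ρ - z w' ρ))/κ := by
        rw [intervalIntegral.integral_sub ((hz w w.continuous).intervalIntegrable _ _)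
          ((hz w' w'.continuous).intervalIntegrable _ _)]
        simp only [V]; ring
      have e2 : |∫ ρ in (0:ℝ)..t, (z w ρ - z w' ρ)| ≤ ∫ ρ in (0:ℝ)..t, δ * Real.exp (A*ρ) := by
        rw [← Real.norm_eq_abs]
        apply intervalIntegral.norm_integral_le_of_norm_le ht0
        · exact Filter.Eventually.of_forall fun ρ _ => hzd ρ
        · apply Continuous.intervalIntegrable; fun_prop
      rw [intervalIntegral.integral_const_mul] at e2
      rw [e1, abs_div, abs_of_pos hκ0]
      calc _ ≤ |∫ ρ in (0:ℝ)..t, (z w ρ - z w' ρ)| := div_le_self (abs_nonneg _) hκ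
        _ ≤ _ := e2
        _ ≤ _ := by gcongr; exact exp_int_bound A t hA
    have hDd : |D w t - D w' t| ≤ δ * (Real.exp (A*t)/A) := by
      have hi : ∀ w : BoundedContinuousFunction ℝ ℝ,
          Continuous (fun s : ℝ => s^κ * z w (t*s)) := fun w =>
        hpow.mul ((hz w w.continuous).comp (continuous_const.mul continuous_id))
      have e1 : D w t - D w' t = t * (∫ s in (0:ℝ)..1, (s^κ * z w (t*s) - s^κ * z w' (t*s))) := by
        rw [intervalIntegral.integral_sub ((hi w).intervalIntegrable _ _)
          ((hi w').intervalIntegrable _ _)]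
        simp only [D]; ring
      have e2 : |∫ s in (0:ℝ)..1, (s^κ * z w (t*s) - s^κ * z w' (t*s))| ≤
          ∫ s in (0:ℝ)..1, δ * Real.exp (A*(t*s)) := by
        rw [← Real.norm_eq_abs]
        apply intervalIntegral.norm_integral_le_of_norm_le zero_le_one
        · refine Filter.Eventually.of_forall fun s hs => ?_
          rw [← mul_sub, norm_mul, Real.norm_eq_abs, Real.norm_eq_abs]
          have h1 : |s^κ| ≤ 1 := by
            rw [abs_of_nonneg (Real.rpow_nonneg hs.1.le _)]
            exact Real.rpow_le_one hs.1.le hs.2 hκ0.le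
          have h2 := hzd (t*s)
          nlinarith [abs_nonneg (z w (t*s) - z w' (t*s))]
        · apply Continuous.intervalIntegrable; fun_prop
      have e3 : t * ∫ s in (0:ℝ)..1, Real.exp (A*(t*s)) = ∫ ρ in (0:ℝ)..t, Real.exp (A*ρ) := by
        have := intervalIntegral.mul_integral_comp_mul_left (a := 0) (b := 1)
          (f := fun ρ => Real.exp (A*ρ)) t
        simpa using this
      rw [intervalIntegral.integral_const_mul] at e2
      rw [e1, abs_mul, abs_of_nonneg ht0]
      calc _ ≤ t * (δ * ∫ s in (0:ℝ)..1, Real.exp (A*(t*s))) := by gcongr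
        _ = δ * (t * ∫ s in (0:ℝ)..1, Real.exp (A*(t*s))) := by ring
        _ = δ * ∫ ρ in (0:ℝ)..t, Real.exp (A*ρ) := by rw [e3]
        _ ≤ _ := by gcongr; exact exp_int_bound A t hA
    have hGd := hL t (hc r) (V w t) (D w t) (V w' t) (D w' t)
    change |S0 w r - S0 w' r| ≤ _
    have e : S0 w r - S0 w' r = Real.exp (-(A*t)) * (G t (V w t) (D w t) - G t (V w' t) (D w' t)) := by
      simp only [S0, ← ht]; ring
    rw [e, abs_mul, Real.abs_exp]
    calc _ ≤ Real.exp (-(A*t)) * (K * (δ * (Real.exp (A*t)/A) + δ * (Real.exp (A*t)/A))) := by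
          gcongr
          exact hGd.trans (by gcongr)
      _ = (Real.exp (-(A*t)) * Real.exp (A*t)) * (K * 2/A) * δ := by ring
      _ = (K*2/A) * δ := by rw [← Real.exp_add]; simp
      _ ≤ _ := by
        have : ((1/2 : NNReal) : ℝ) = 1/2 := by simp
        rw [this]; gcongr
  have hfix := hSc.fixedPoint_isFixedPt
  set w := hSc.fixedPoint with hw
  have hwr : ∀ r ∈ Icc 0 R, z w r = G r (V w r) (D w r) := by
    intro r hr
    have h1 : S w r = w r := by rw [hfix]
    have h2 : S w r = Real.exp (-(A * r)) * G r (V w r) (D w r) := by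
      change S0 w r = _
      simp only [S0, hceq r hr]
    simp only [z]
    rw [← h1, h2, ← mul_assoc, ← Real.exp_add]; simp
  refine ⟨V w, D w, hV w w.continuous, hD w w.continuous, by simp [V], by simp [D], ?_⟩
  intro r hr
  have hzr := hwr r ⟨hr.1.le, hr.2.le⟩
  have hzc := hz w w.continuous
  rw [← hzr]
  constructor
  · have := (intervalIntegral.integral_hasDerivAt_right (hzc.intervalIntegrable 0 r)
      (hzc.stronglyMeasurableAtFilter _ _) hzc.continuousAt)
    exact (this.div_const κ).const_add μ
  · have hic : Continuous (fun ρ : ℝ => ρ^κ * z w ρ) := hpow.mul hzc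
    have hDr : ∀ x > 0, D w x = x^(-κ) * ∫ ρ in (0:ℝ)..x, ρ^κ * z w ρ := by
      intro x hx
      have h1 := intervalIntegral.mul_integral_comp_mul_left (a := 0) (b := 1)
          (f := fun ρ : ℝ => ρ^κ * z w ρ) x
      simp only [mul_zero, mul_one] at h1
      rw [← h1]
      simp only [D]
      have h2 : ∫ s in (0:ℝ)..1, (x*s)^κ * z w (x*s) = x^κ * ∫ s in (0:ℝ)..1, s^κ * z w (x*s) := by
        rw [← intervalIntegral.integral_const_mul]
        apply intervalIntegral.integral_congr
        intro s hs
        rw [uIcc_of_le zero_le_one] at hs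
        simp only
        rw [Real.mul_rpow hx.le hs.1]; ring
      rw [h2]
      have h3 : x^(-κ) * x^κ = 1 := by rw [← Real.rpow_add hx]; simp
      linear_combination (-(x * ∫ s in (0:ℝ)..1, s^κ * z w (x*s))) * h3
    have h1 := (intervalIntegral.integral_hasDerivAt_right (hic.intervalIntegrable 0 r)
      (hic.stronglyMeasurableAtFilter _ _) hic.continuousAt)
    have h2 := Real.hasDerivAt_rpow_const (x := r) (p := -κ) (Or.inl hr.1.ne')
    have h3 := (h2.mul h1).congr_of_eventuallyEq (f₁ := D w) (by
      filter_upwards [lt_mem_nhds hr.1] with x hx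
      exact hDr x hx)
    refine h3.congr_deriv ?_
    rw [hDr r hr.1]
    have e1 : r^(-κ-1) = r^(-κ)/r := Real.rpow_sub_one hr.1.ne' _
    have e3 : r^(-κ) * r^κ = 1 := by rw [← Real.rpow_add hr.1]; simp
    rw [e1]
    linear_combination (z w r) * e3


lemma gron (E E' : ℝ → ℝ) (a b C : ℝ) (hc : ContinuousOn E (Icc a b))
    (hd : ∀ r ∈ Ioo a b, HasDerivAt E (E' r) r) (hle : ∀ r ∈ Ioo a b, E' r ≤ C * E r) :
    ∀ r ∈ Icc a b, E r ≤ E a * Real.exp (C * (r - a)) := by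
  intro r hr
  have h : AntitoneOn (fun r => E r * Real.exp (-(C * (r - a)))) (Icc a b) := by
    apply antitoneOn_of_hasDerivWithinAt_nonpos (convex_Icc a b)
      (f' := fun r => E' r * Real.exp (-(C * (r - a))) + E r * (Real.exp (-(C * (r - a))) * (-(C * 1))))
    · exact hc.mul (by fun_prop)
    · intro x hx
      rw [interior_Icc] at hx
      apply HasDerivAt.hasDerivWithinAt
      exact (hd x hx).mul (((((hasDerivAt_id x).sub_const a).const_mul C).neg).exp)
    · intro x hx
      rw [interior_Icc] at hx
      have := hle x hx
      have h2 := Real.exp_pos (-(C * (x - a)))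
      nlinarith
  have h1 := h (left_mem_Icc.2 (hr.1.trans hr.2)) hr hr.1
  simp only [sub_self, mul_zero, neg_zero, Real.exp_zero, mul_one] at h1
  calc E r = E r * Real.exp (-(C * (r - a))) * Real.exp (C * (r - a)) := by
        rw [mul_assoc, ← Real.exp_add]; simp
    _ ≤ _ := by gcongr

noncomputable def Fn (m lam r u p : ℝ) : ℝ := p * (p - lam + m * u) / (2 * (1 + r * u))
noncomputable def clp (M x : ℝ) : ℝ := max (-M) (min M x)
noncomputable def Ft (m lam M η r u p : ℝ) : ℝ :=
  clp M p * (clp M p - lam + m * clp M u) / (2 * max (1 + r * u) η)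

lemma clp_abs {M : ℝ} (hM : 0 ≤ M) (x : ℝ) : |clp M x| ≤ M := by
  rw [abs_le]
  exact ⟨le_max_left _ _, max_le (by linarith) (min_le_left _ _)⟩
lemma clp_eq {M x : ℝ} (h : |x| ≤ M) : clp M x = x := by
  rw [abs_le] at h
  simp [clp, h.1, h.2]
lemma clp_lip (M x y : ℝ) : |clp M x - clp M y| ≤ |x - y| := by
  have h1 := abs_max_sub_max_le_abs (min M x) (min M y) (-M)
  have h2 := abs_min_sub_min_le_max M x M y
  simp only [sub_self, abs_zero] at h2
  rw [max_eq_right (abs_nonneg _)] at h2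
  unfold clp
  rw [max_comm (-M), max_comm (-M)]
  exact h1.trans h2

lemma Ft_eq {m lam M η r u p : ℝ} (hu : |u| ≤ M) (hp : |p| ≤ M) (hh : η ≤ 1 + r * u) :
    Ft m lam M η r u p = Fn m lam r u p := by
  unfold Ft Fn
  rw [clp_eq hu, clp_eq hp, max_eq_left hh]

lemma Ft_cont (m lam M η : ℝ) (hη : 0 < η) :
    Continuous fun x : ℝ × ℝ × ℝ => Ft m lam M η x.1 x.2.1 x.2.2 := by
  unfold Ft clp
  apply Continuous.div
  · fun_prop
  · fun_prop
  · intro x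
    have : 0 < max (1 + x.1 * x.2.1) η := lt_max_of_lt_right hη
    positivity

lemma num_bd {m lam M : ℝ} (hm : 0 ≤ m) {a b : ℝ} (ha : |a| ≤ M) (hb : |b| ≤ M) :
    |b * (b - lam + m * a)| ≤ M * (M + |lam| + m * M) := by
  have hM : 0 ≤ M := (abs_nonneg _).trans ha
  rw [abs_mul]
  have : |b - lam + m * a| ≤ M + |lam| + m * M := by
    calc _ ≤ |b - lam| + |m * a| := abs_add_le _ _
      _ ≤ |b| + |lam| + m * |a| := by
        rw [abs_mul, abs_of_nonneg hm]; gcongr; exact abs_sub _ _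
      _ ≤ _ := by gcongr
  gcongr

lemma Ft_bd (m lam M η : ℝ) (hm : 0 ≤ m) (hM : 0 ≤ M) (hη : 0 < η) (r u p : ℝ) :
    |Ft m lam M η r u p| ≤ M * (M + |lam| + m * M) / (2 * η) := by
  unfold Ft
  have h0 : η ≤ max (1 + r * u) η := le_max_right _ _
  rw [abs_div, abs_of_pos (show 0 < 2 * max (1 + r * u) η by linarith)]
  have := num_bd (lam := lam) hm (clp_abs hM u) (clp_abs hM p)
  gcongr

lemma Ft_lip (m lam M η R : ℝ) (hm : 0 ≤ m) (hM : 0 ≤ M) (hη : 0 < η) (hR : 0 ≤ R) :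
    ∃ K, 0 ≤ K ∧ ∀ r ∈ Icc 0 R, ∀ u p u' p', |Ft m lam M η r u p - Ft m lam M η r u' p'| ≤
      K * (|u - u'| + |p - p'|) := by
  set B := M * (M + |lam| + m * M) with hB
  have hB0 : 0 ≤ B := by positivity
  set N := (M + |lam| + m * M) + M + M * m with hN
  have hN0 : 0 ≤ N := by positivity
  refine ⟨N / (2 * η) + B * (2 * R) / (2 * η) / (2 * η), by positivity, ?_⟩
  intro r hr u p u' p'
  unfold Ft
  set a := clp M u
  set a' := clp M u'
  set b := clp M p
  set b' := clp M p'
  set D := 2 * max (1 + r * u) η with hD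
  set D' := 2 * max (1 + r * u') η with hD'
  have hDη : 2 * η ≤ D := by have := le_max_right (1 + r * u) η; linarith
  have hDη' : 2 * η ≤ D' := by have := le_max_right (1 + r * u') η; linarith
  have ha : |a - a'| ≤ |u - u'| := clp_lip _ _ _
  have hb : |b - b'| ≤ |p - p'| := clp_lip _ _ _
  have hbM : |b'| ≤ M := clp_abs hM _
  have hbM0 : |b| ≤ M := clp_abs hM _
  have haM0 : |a| ≤ M := clp_abs hM _
  have hDD : |D' - D| ≤ 2 * R * (|u - u'|) := by
    have h1 := abs_max_sub_max_le_abs (1 + r * u') (1 + r * u) η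
    have h2 : |1 + r * u' - (1 + r * u)| ≤ R * |u - u'| := by
      rw [show 1 + r * u' - (1 + r * u) = r * (u' - u) by ring, abs_mul, abs_of_nonneg hr.1,
        abs_sub_comm]
      gcongr; exact hr.2
    rw [hD, hD', ← mul_sub, abs_mul, abs_two]
    linarith
  have hNN : |b * (b - lam + m * a) - b' * (b' - lam + m * a')| ≤ N * (|u - u'| + |p - p'|) := by
    have e : b * (b - lam + m * a) - b' * (b' - lam + m * a') =
      (b - b') * (b - lam + m * a) + b' * (b - b') + b' * (m * (a - a')) := by ring
    have h3 : |b - lam + m * a| ≤ M + |lam| + m * M := by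
      calc _ ≤ |b - lam| + |m * a| := abs_add_le _ _
        _ ≤ |b| + |lam| + m * |a| := by
          rw [abs_mul, abs_of_nonneg hm]; gcongr; exact abs_sub _ _
        _ ≤ _ := by gcongr
    rw [e]
    calc _ ≤ |(b - b') * (b - lam + m * a)| + |b' * (b - b')| + |b' * (m * (a - a'))| :=
          abs_add_three _ _ _
      _ ≤ |p - p'| * (M + |lam| + m * M) + M * |p - p'| + M * (m * |u - u'|) := by
          simp only [abs_mul, abs_of_nonneg hm]; gcongr
      _ ≤ _ := by
          rw [hN]
          have : 0 ≤ M * m * |p - p'| := by positivity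
          have : 0 ≤ ((M + |lam| + m * M) + M) * |u - u'| := by positivity
          nlinarith
  have hBB : |b' * (b' - lam + m * a')| ≤ B := num_bd hm (clp_abs hM _) hbM
  set n1 := b * (b - lam + m * a)
  set n2 := b' * (b' - lam + m * a')
  have hDp : 0 < D := by linarith
  have hDp' : 0 < D' := by linarith
  have e : n1 / D - n2 / D' = (n1 - n2) / D + n2 * (D' - D) / D / D' := by field_simp; ring
  rw [e]
  calc _ ≤ |(n1 - n2) / D| + |n2 * (D' - D) / D / D'| := abs_add_le _ _
    _ = |n1 - n2| / D + |n2| * |D' - D| / D / D' := by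
      simp only [abs_div, abs_mul, abs_of_pos hDp, abs_of_pos hDp']
    _ ≤ (N * (|u - u'| + |p - p'|)) / (2 * η) + B * (2 * R * |u - u'|) / (2 * η) / (2 * η) := by gcongr
    _ ≤ (N * (|u - u'| + |p - p'|)) / (2 * η) + B * (2 * R * (|u - u'| + |p - p'|)) / (2 * η) / (2 * η) := by
      gcongr; linarith [abs_nonneg (p - p')]
    _ = _ := by ring

noncomputable def uu (m : ℝ) (v d : ℝ → ℝ) (r : ℝ) : ℝ := v r - d r / (1 + m / 2)
noncomputable def pp (m : ℝ) (v d : ℝ → ℝ) (r : ℝ) : ℝ := uu m v d r + d r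
noncomputable def hh (m : ℝ) (v d : ℝ → ℝ) (r : ℝ) : ℝ := 1 + r * uu m v d r

structure Sys (m lam μ T : ℝ) (v d : ℝ → ℝ) : Prop where
  cv : ContinuousOn v (Icc 0 T)
  cd : ContinuousOn d (Icc 0 T)
  v0 : v 0 = μ
  d0 : d 0 = 0
  pos : ∀ r ∈ Icc 0 T, 0 < hh m v d r
  dv : ∀ r ∈ Ioo 0 T, HasDerivAt v (Fn m lam r (uu m v d r) (pp m v d r) / (1 + m / 2)) r
  dd : ∀ r ∈ Ioo 0 T, HasDerivAt d
    (-(1 + m / 2) / r * d r + Fn m lam r (uu m v d r) (pp m v d r)) r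

lemma Sys.mono {m lam μ T T' : ℝ} {v d : ℝ → ℝ} (h : Sys m lam μ T v d) (hT : T' ≤ T) :
    Sys m lam μ T' v d :=
  ⟨h.cv.mono (Icc_subset_Icc_right hT), h.cd.mono (Icc_subset_Icc_right hT), h.v0, h.d0,
    fun r hr => h.pos r (Icc_subset_Icc_right hT hr), fun r hr => h.dv r (Ioo_subset_Ioo_right hT hr),
    fun r hr => h.dd r (Ioo_subset_Ioo_right hT hr)⟩

section
variable {m lam μ T : ℝ} {v d : ℝ → ℝ}
lemma Sys.cu (h : Sys m lam μ T v d) : ContinuousOn (uu m v d) (Icc 0 T) :=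
  h.cv.sub (h.cd.div_const _)
lemma Sys.cp (h : Sys m lam μ T v d) : ContinuousOn (pp m v d) (Icc 0 T) := h.cu.add h.cd
lemma Sys.ch (h : Sys m lam μ T v d) : ContinuousOn (hh m v d) (Icc 0 T) :=
  continuousOn_const.add (continuousOn_id.mul h.cu)
lemma Sys.u0 (h : Sys m lam μ T v d) : uu m v d 0 = μ := by simp [uu, h.v0, h.d0]
lemma Sys.p0 (h : Sys m lam μ T v d) : pp m v d 0 = μ := by simp [pp, h.u0, h.d0]

lemma Sys.bdd (h : Sys m lam μ T v d) (hT : 0 ≤ T) :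
    ∃ M η, 0 ≤ M ∧ 0 < η ∧ ∀ r ∈ Icc 0 T, |uu m v d r| ≤ M ∧ |pp m v d r| ≤ M ∧ η ≤ hh m v d r := by
  obtain ⟨M1, h1⟩ := isCompact_Icc.exists_bound_of_continuousOn h.cu
  obtain ⟨M2, h2⟩ := isCompact_Icc.exists_bound_of_continuousOn h.cp
  obtain ⟨x, hx, h3⟩ := isCompact_Icc.exists_isMinOn (nonempty_Icc.2 hT) h.ch
  refine ⟨max M1 M2, hh m v d x, ?_, h.pos x hx, ?_⟩
  · exact le_trans ((norm_nonneg _).trans (h1 0 ⟨le_rfl, hT⟩)) (le_max_left _ _)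
  · intro r hr
    exact ⟨(h1 r hr).trans (le_max_left _ _), (h2 r hr).trans (le_max_right _ _), h3 hr⟩

lemma Sys.du (h : Sys m lam μ T v d) (hm : 0 < m) {r : ℝ} (hr : r ∈ Ioo 0 T) :
    HasDerivAt (uu m v d) (d r / r) r := by
  refine ((h.dv r hr).sub ((h.dd r hr).div_const _)).congr_deriv ?_
  have := hr.1.ne'
  field_simp; ring

lemma Sys.dp (h : Sys m lam μ T v d) (hm : 0 < m) {r : ℝ} (hr : r ∈ Ioo 0 T) :
    HasDerivAt (pp m v d) (m * (hh m v d r - 1) / (2 * r ^ 2) + (pp m v d r) ^ 2 / (2 * hh m v d r)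
      - (m + lam * r) * pp m v d r / (2 * r * hh m v d r)) r := by
  refine ((h.du hm hr).add (h.dd r hr)).congr_deriv ?_
  have h0 := hr.1.ne'
  have h1 := (h.pos r ⟨hr.1.le, hr.2.le⟩).ne'
  unfold Fn
  have e : 1 + r * uu m v d r = hh m v d r := rfl
  rw [e]
  have e3 : d r = pp m v d r - uu m v d r := by simp [pp]
  rw [e3]
  generalize pp m v d r = p
  have e2 : uu m v d r = (hh m v d r - 1) / r := by unfold hh; field_simp; ring
  rw [e2]
  generalize hh m v d r = H at *
  field_simp; ring

lemma Sys.dh (h : Sys m lam μ T v d) (hm : 0 < m) {r : ℝ} (hr : r ∈ Ioo 0 T) :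
    HasDerivAt (hh m v d) (pp m v d r) r := by
  refine (((hasDerivAt_id r).mul (h.du hm hr)).const_add 1).congr_deriv ?_
  have h0 := hr.1.ne'
  simp only [id, pp]; field_simp

lemma Sys.dh0 (h : Sys m lam μ T v d) (hT : 0 < T) :
    HasDerivWithinAt (hh m v d) μ (Ici 0) 0 := by
  rw [hasDerivWithinAt_iff_tendsto_slope]
  have h1 : Tendsto (uu m v d) (𝓝[>] 0) (𝓝 μ) := by
    have := (h.cu 0 ⟨le_rfl, hT.le⟩).tendsto
    rw [h.u0] at this
    refine this.mono_left ?_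
    rw [← nhdsWithin_Ioo_eq_nhdsGT hT]
    exact nhdsWithin_mono _ Ioo_subset_Icc_self
  have e : Ici (0:ℝ) \ {0} = Ioi 0 := Ici_sdiff_left
  rw [e]
  refine h1.congr' ?_
  filter_upwards [self_mem_nhdsWithin] with x hx
  have hx' : x ≠ 0 := ne_of_gt hx
  simp [slope, hh]
  field_simp
end

lemma sys_unique {m lam μ T : ℝ} (hm : 0 < m) (hT : 0 ≤ T) {v d v' d' : ℝ → ℝ}
    (h : Sys m lam μ T v d) (h' : Sys m lam μ T v' d') :
    ∀ r ∈ Icc 0 T, v r = v' r ∧ d r = d' r := by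
  obtain ⟨M1, η1, hM1, hη1, hb1⟩ := h.bdd hT
  obtain ⟨M2, η2, hM2, hη2, hb2⟩ := h'.bdd hT
  obtain ⟨K, hK, hL⟩ := Ft_lip m lam (max M1 M2) (min η1 η2) T hm.le (hM1.trans (le_max_left _ _))
    (lt_min hη1 hη2) hT
  have hFl : ∀ r ∈ Icc 0 T, |Fn m lam r (uu m v d r) (pp m v d r) -
      Fn m lam r (uu m v' d' r) (pp m v' d' r)| ≤ K * (2 * |v r - v' r| + 3 * |d r - d' r|) := by
    intro r hr
    obtain ⟨a1, a2, a3⟩ := hb1 r hr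
    obtain ⟨b1, b2, b3⟩ := hb2 r hr
    have h1 := hL r hr (uu m v d r) (pp m v d r) (uu m v' d' r) (pp m v' d' r)
    rw [Ft_eq (a1.trans (le_max_left _ _)) (a2.trans (le_max_left _ _)) ((min_le_left _ _).trans a3),
      Ft_eq (b1.trans (le_max_right _ _)) (b2.trans (le_max_right _ _)) ((min_le_right _ _).trans b3)]
      at h1
    have hu : |uu m v d r - uu m v' d' r| ≤ |v r - v' r| + |d r - d' r| := by
      have e : uu m v d r - uu m v' d' r = (v r - v' r) + -((d r - d' r) / (1 + m/2)) := by
        unfold uu; ring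
      rw [e]
      refine (abs_add_le _ _).trans ?_
      rw [abs_neg, abs_div, abs_of_pos (show 0 < 1 + m/2 by linarith)]
      gcongr
      exact div_le_self (abs_nonneg _) (by linarith)
    have hp : |pp m v d r - pp m v' d' r| ≤ |v r - v' r| + |d r - d' r| + |d r - d' r| := by
      have e : pp m v d r - pp m v' d' r = (uu m v d r - uu m v' d' r) + (d r - d' r) := by
        unfold pp; ring
      rw [e]
      exact (abs_add_le _ _).trans (by gcongr)
    exact h1.trans (mul_le_mul_of_nonneg_left (by linarith) hK)
  have hE := gron (fun r => (v r - v' r)^2 + (d r - d' r)^2) _ 0 T (2 * (5 * K) + 10 * K) (by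
      exact ((h.cv.sub h'.cv).pow 2).add ((h.cd.sub h'.cd).pow 2))
    (fun r hr => (((h.dv r hr).sub (h'.dv r hr)).pow 2).add (((h.dd r hr).sub (h'.dd r hr)).pow 2))
    (by
      intro r hr
      have hf := hFl r ⟨hr.1.le, hr.2.le⟩
      simp only [Pi.sub_apply]
      set F := Fn m lam r (uu m v d r) (pp m v d r)
      set F' := Fn m lam r (uu m v' d' r) (pp m v' d' r)
      set x := v r - v' r with hx
      set y := d r - d' r with hy
      have hκ : 0 < 1 + m/2 := by linarith
      have e : (↑2 * x ^ (2 - 1) * (F / (1 + m / 2) - F' / (1 + m / 2)) +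
        ↑2 * y ^ (2 - 1) * (-(1 + m / 2) / r * d r + F - (-(1 + m / 2) / r * d' r + F'))) =
        2 * x * ((F - F') / (1 + m/2)) + 2 * y * (F - F') - 2 * ((1+m/2)/r * y^2) := by
        rw [hy]; ring
      push_cast
      rw [e]
      have h1 : 0 ≤ (1+m/2)/r * y^2 := by have := hr.1; positivity
      have h2 : x * ((F - F') / (1 + m/2)) ≤ |x| * |F - F'| := by
        refine (le_abs_self _).trans ?_
        rw [abs_mul, abs_div, abs_of_pos hκ]
        gcongr
        exact div_le_self (abs_nonneg _) (by linarith)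
      have h3 : y * (F - F') ≤ |y| * |F - F'| := by rw [← abs_mul]; exact le_abs_self _
      have h4 : (|x| + |y|) * |F - F'| ≤ (|x| + |y|) * (K * (2 * |x| + 3 * |y|)) := by gcongr
      have h5 : (|x| + |y|) * (2 * |x| + 3 * |y|) ≤ 10 * (x^2 + y^2) := by
        rw [← sq_abs x, ← sq_abs y]
        nlinarith [sq_nonneg (|x| - |y|), sq_nonneg (|x|), sq_nonneg |y|]
      have h6 := mul_le_mul_of_nonneg_left h5 hK
      nlinarith)
  intro r hr
  have := hE r hr
  simp only [h.v0, h'.v0, h.d0, h'.d0, sub_self] at this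
  norm_num at this
  constructor
  · nlinarith [sq_nonneg (v r - v' r), sq_nonneg (d r - d' r)]
  · nlinarith [sq_nonneg (v r - v' r), sq_nonneg (d r - d' r)]


lemma trunc (m lam μ M η R : ℝ) (hm : 0 < m) (hM : 0 ≤ M) (hη : 0 < η) (hR : 0 < R) :
    ∃ v d : ℝ → ℝ, Continuous v ∧ Continuous d ∧ v 0 = μ ∧ d 0 = 0 ∧
      ∀ T ≤ R, (∀ r ∈ Icc 0 T, |uu m v d r| ≤ M ∧ |pp m v d r| ≤ M ∧ η ≤ hh m v d r) →
        Sys m lam μ T v d := by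
  obtain ⟨K, hK, hL⟩ := Ft_lip m lam M η R hm.le hM hη hR.le
  have hκ : 1 ≤ 1 + m/2 := by linarith
  obtain ⟨v, d, hv, hd, hv0, hd0, hder⟩ := exist_lip (1+m/2) R μ (3 * K)
    (M * (M + |lam| + m * M) / (2 * η)) hκ hR (by linarith)
    (fun r v d => Ft m lam M η r (v - d/(1+m/2)) (v - d/(1+m/2) + d))
    ((Ft_cont m lam M η hη).comp
      (f := fun x : ℝ × ℝ × ℝ => (x.1, x.2.1 - x.2.2/(1+m/2), x.2.1 - x.2.2/(1+m/2) + x.2.2))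
      (by fun_prop))
    (fun r v d => Ft_bd m lam M η hm.le hM hη _ _ _)
    (by
      intro r hr a b a' b'
      refine (hL r hr _ _ _ _).trans ?_
      have hu : |a - b/(1+m/2) - (a' - b'/(1+m/2))| ≤ |a - a'| + |b - b'| := by
        rw [show a - b/(1+m/2) - (a' - b'/(1+m/2)) = (a - a') + -((b - b')/(1+m/2)) by ring]
        refine (abs_add_le _ _).trans ?_
        rw [abs_neg, abs_div, abs_of_pos (show 0 < 1 + m/2 by linarith)]
        gcongr
        exact div_le_self (abs_nonneg _) hκ
      have hp : |a - b/(1+m/2) + b - (a' - b'/(1+m/2) + b')| ≤ |a - a'| + |b - b'| + |b - b'| := by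
        rw [show a - b/(1+m/2) + b - (a' - b'/(1+m/2) + b') =
          (a - b/(1+m/2) - (a' - b'/(1+m/2))) + (b - b') by ring]
        exact (abs_add_le _ _).trans (by gcongr)
      rw [mul_comm 3 K, mul_assoc]
      exact mul_le_mul_of_nonneg_left (by linarith [abs_nonneg (a - a')]) hK)
  refine ⟨v, d, hv, hd, hv0, hd0, ?_⟩
  intro T hT hb
  have hF : ∀ r ∈ Ioo 0 T, Ft m lam M η r (v r - d r/(1+m/2)) (v r - d r/(1+m/2) + d r) =
      Fn m lam r (uu m v d r) (pp m v d r) := by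
    intro r hr
    obtain ⟨h1, h2, h3⟩ := hb r ⟨hr.1.le, hr.2.le⟩
    exact Ft_eq h1 h2 h3
  refine ⟨hv.continuousOn, hd.continuousOn, hv0, hd0, fun r hr => hη.trans_le (hb r hr).2.2, ?_, ?_⟩
  · intro r hr
    have := (hder r ⟨hr.1, hr.2.trans_le hT⟩).1
    rwa [hF r hr] at this
  · intro r hr
    have := (hder r ⟨hr.1, hr.2.trans_le hT⟩).2
    rwa [hF r hr] at this

lemma c_uu (m : ℝ) {v d : ℝ → ℝ} (hv : Continuous v) (hd : Continuous d) : Continuous (uu m v d) :=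
  hv.sub (hd.div_const _)
lemma c_pp (m : ℝ) {v d : ℝ → ℝ} (hv : Continuous v) (hd : Continuous d) : Continuous (pp m v d) :=
  (c_uu m hv hd).add hd
lemma c_hh (m : ℝ) {v d : ℝ → ℝ} (hv : Continuous v) (hd : Continuous d) : Continuous (hh m v d) :=
  continuous_const.add (continuous_id.mul (c_uu m hv hd))

lemma local_ex (m lam μ : ℝ) (hm : 0 < m) : ∃ r0 > 0, ∃ v d, Sys m lam μ r0 v d := by
  obtain ⟨v, d, hv, hd, hv0, hd0, hS⟩ := trunc m lam μ (|μ|+1) (1/2) 1 hm (by positivity)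
    (by norm_num) one_pos
  have hu0 : uu m v d 0 = μ := by simp [uu, hv0, hd0]
  have hp0 : pp m v d 0 = μ := by simp [pp, hu0, hd0]
  have hh0 : hh m v d 0 = 1 := by simp [hh]
  have e1 : ∀ᶠ r in 𝓝 (0:ℝ), |uu m v d r| < |μ|+1 :=
    (c_uu m hv hd).abs.continuousAt.eventually_lt_const (by simp [hu0])
  have e2 : ∀ᶠ r in 𝓝 (0:ℝ), |pp m v d r| < |μ|+1 :=
    (c_pp m hv hd).abs.continuousAt.eventually_lt_const (by simp [hp0])
  have e3 : ∀ᶠ r in 𝓝 (0:ℝ), 1/2 < hh m v d r :=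
    (c_hh m hv hd).continuousAt.eventually_const_lt (by rw [hh0]; norm_num)
  obtain ⟨ε, hε, hball⟩ := Metric.eventually_nhds_iff.1 (e1.and (e2.and e3))
  refine ⟨min 1 (ε/2), by positivity, v, d, hS _ (min_le_left _ _) ?_⟩
  intro r hr
  have : dist r 0 < ε := by
    rw [Real.dist_eq, sub_zero, abs_of_nonneg hr.1]
    have := hr.2.trans (min_le_right _ _)
    linarith
  obtain ⟨h1, h2, h3⟩ := hball this
  exact ⟨h1.le, h2.le, h3.le⟩

lemma cont_ex (m lam μ R M0 η0 : ℝ) (hm : 0 < m) (hR : 0 < R) (hη0 : 0 < η0)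
    (hap : ∀ T ∈ Ioc 0 R, ∀ v d, Sys m lam μ T v d → ∀ r ∈ Icc 0 T,
      |uu m v d r| ≤ M0 ∧ |pp m v d r| ≤ M0 ∧ η0 ≤ hh m v d r) (hμ : |μ| ≤ M0) (hη1 : η0 ≤ 1) :
    ∃ v d, Sys m lam μ R v d := by
  obtain ⟨v, d, hv, hd, hv0, hd0, hS⟩ := trunc m lam μ (M0+1) (η0/2) R hm
    (by linarith [abs_nonneg μ]) (by positivity) hR
  have hu0 : uu m v d 0 = μ := by simp [uu, hv0, hd0]
  have hp0 : pp m v d 0 = μ := by simp [pp, hu0, hd0]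
  have hh0 : hh m v d 0 = 1 := by simp [hh]
  refine ⟨v, d, hS R le_rfl ?_⟩
  let P : ℝ → Prop := fun r => |uu m v d r| ≤ M0 + 1 ∧ |pp m v d r| ≤ M0 + 1 ∧ η0/2 ≤ hh m v d r
  have hPc : IsClosed {r | P r} := by
    apply IsClosed.inter (isClosed_le (c_uu m hv hd).abs continuous_const)
    exact IsClosed.inter (isClosed_le (c_pp m hv hd).abs continuous_const)
      (isClosed_le continuous_const (c_hh m hv hd))
  have key : Icc 0 R ⊆ {r | P r} := by
    apply IsClosed.Icc_subset_of_forall_mem_nhdsGT_of_Icc_subset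
    · exact hPc.inter isClosed_Icc
    · change |uu m v d 0| ≤ M0 + 1 ∧ |pp m v d 0| ≤ M0 + 1 ∧ η0/2 ≤ hh m v d 0
      rw [hu0, hp0, hh0]
      exact ⟨by linarith, by linarith, by linarith⟩
    · intro T hT hsub
      have hb : |uu m v d T| ≤ M0 ∧ |pp m v d T| ≤ M0 ∧ η0 ≤ hh m v d T := by
        rcases hT.1.eq_or_lt with h0 | h0
        · rw [← h0, hu0, hp0, hh0]; exact ⟨hμ, hμ, hη1⟩
        · exact hap T ⟨h0, hT.2.le⟩ v d (hS T hT.2.le fun r hr => hsub hr) T ⟨hT.1, le_rfl⟩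
      have e1 : ∀ᶠ r in 𝓝 T, |uu m v d r| < M0+1 :=
        (c_uu m hv hd).abs.continuousAt.eventually_lt_const (by linarith)
      have e2 : ∀ᶠ r in 𝓝 T, |pp m v d r| < M0+1 :=
        (c_pp m hv hd).abs.continuousAt.eventually_lt_const (by linarith)
      have e3 : ∀ᶠ r in 𝓝 T, η0/2 < hh m v d r :=
        (c_hh m hv hd).continuousAt.eventually_const_lt (by linarith)
      apply mem_nhdsWithin_of_mem_nhds
      filter_upwards [e1, e2, e3] with r h1 h2 h3
      exact ⟨h1.le, h2.le, h3.le⟩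
  exact fun r hr => key hr

/-- monotone quantity -/
lemma Q_lower {m lam μ T : ℝ} {v d : ℝ → ℝ} (hm : 0 < m) (h : Sys m lam μ T v d)
    (hq : ∀ r ∈ Icc 0 T, 0 ≤ m + lam * r) :
    ∀ r ∈ Ioo 0 T, (1 + m/2) * μ ≤
      pp m v d r + (m / (2 * r) + lam / 2) * Real.log (hh m v d r) := by
  have hmono : MonotoneOn (fun r => pp m v d r + (m / (2 * r) + lam / 2) * Real.log (hh m v d r))
      (Ioo 0 T) := by
    have hder : ∀ r ∈ Ioo 0 T, HasDerivAt
        (fun r => pp m v d r + (m / (2 * r) + lam / 2) * Real.log (hh m v d r))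
        (m / (2 * r^2) * (hh m v d r - 1 - Real.log (hh m v d r)) +
          (pp m v d r)^2 / (2 * hh m v d r)) r := by
      intro r hr
      have h0 := hr.1.ne'
      have h1 := (h.pos r ⟨hr.1.le, hr.2.le⟩).ne'
      have e1 : HasDerivAt (fun r : ℝ => m / (2 * r) + lam / 2) (-(m / (2 * r^2))) r := by
        have := (((hasDerivAt_inv h0).const_mul (m/2)).add_const (lam/2))
        refine (this.congr_deriv ?_).congr_of_eventuallyEq ?_
        · field_simp
        · filter_upwards with x
          ring
      refine ((h.dp hm hr).add (e1.mul ((h.dh hm hr).log h1))).congr_deriv ?_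
      generalize Real.log (hh m v d r) = l
      generalize hh m v d r = H at *
      generalize pp m v d r = p
      field_simp; ring
    apply monotoneOn_of_hasDerivWithinAt_nonneg (convex_Ioo 0 T)
      (f' := fun r => m / (2 * r^2) * (hh m v d r - 1 - Real.log (hh m v d r)) +
          (pp m v d r)^2 / (2 * hh m v d r))
    · exact fun r hr => (hder r hr).continuousAt.continuousWithinAt
    · intro r hr
      rw [interior_Ioo] at hr ⊢
      exact (hder r hr).hasDerivWithinAt
    · intro r hr
      rw [interior_Ioo] at hr
      have h1 := h.pos r ⟨hr.1.le, hr.2.le⟩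
      have h2 := Real.log_le_sub_one_of_pos h1
      have h3 : 0 ≤ hh m v d r - 1 - Real.log (hh m v d r) := by linarith
      positivity
  intro r hr
  have hT : 0 < T := hr.1.trans hr.2
  let g : ℝ → ℝ := fun s => pp m v d s + (m + lam * s) / 2 * uu m v d s / hh m v d s
  have hg : ContinuousOn g (Icc 0 T) := by
    apply h.cp.add
    apply ContinuousOn.div _ h.ch (fun s hs => (h.pos s hs).ne')
    exact ContinuousOn.mul (by fun_prop) h.cu
  have hg0 : g 0 = (1 + m/2) * μ := by
    simp only [g, h.p0, h.u0, hh]; simp; ring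
  have ht : Tendsto g (𝓝[>] 0) (𝓝 ((1 + m/2) * μ)) := by
    have := (hg 0 ⟨le_rfl, hT.le⟩).tendsto
    rw [hg0] at this
    refine this.mono_left ?_
    rw [← nhdsWithin_Ioo_eq_nhdsGT hT]
    exact nhdsWithin_mono _ Ioo_subset_Icc_self
  refine le_of_tendsto ht ?_
  filter_upwards [Ioo_mem_nhdsGT hr.1] with s hs
  have hs' : s ∈ Ioo 0 T := ⟨hs.1, hs.2.trans hr.2⟩
  refine le_trans ?_ (hmono hs' hr hs.2.le)
  have hp := h.pos s ⟨hs'.1.le, hs'.2.le⟩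
  have h1 := Real.one_sub_inv_le_log_of_pos hp
  have h2 := hq s ⟨hs'.1.le, hs'.2.le⟩
  have h0 := hs.1
  simp only [g]
  have e : (m + lam * s) / 2 * uu m v d s / hh m v d s =
      (m / (2 * s) + lam / 2) * (1 - (hh m v d s)⁻¹) := by
    have : uu m v d s = (hh m v d s - 1) / s := by unfold hh; field_simp; ring
    rw [this]; field_simp
  rw [e]
  have h3 : 0 ≤ m / (2 * s) + lam / 2 := by
    have : m / (2 * s) + lam / 2 = (m + lam * s) / (2 * s) := by field_simp
    rw [this]; positivity
  gcongr

lemma h_lower {m lam μ R : ℝ} (hm : 0 < m) (hlam : lam < 0) (hR : 0 < R) (hq : 0 < m + lam * R) :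
    ∃ η, 0 < η ∧ η ≤ 1 ∧ ∀ T ∈ Ioc 0 R, ∀ v d, Sys m lam μ T v d → ∀ r ∈ Icc 0 T, η ≤ hh m v d r := by
  set a := (m + lam * R) / (2 * R) with ha
  have ha0 : 0 < a := by positivity
  have hb0 : 0 < ((1 + m/2) * |μ| + 1) / a := by positivity
  refine ⟨Real.exp (-(((1 + m/2) * |μ| + 1) / a)), Real.exp_pos _, ?_, ?_⟩
  · rw [Real.exp_le_one_iff]; linarith
  intro T hT v d h r hr
  set η := Real.exp (-(((1 + m/2) * |μ| + 1) / a)) with hη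
  have hη1 : η < 1 := by rw [hη, Real.exp_lt_one_iff]; linarith
  have hqq : ∀ s ∈ Icc 0 T, 0 ≤ m + lam * s := by
    intro s hs
    have : s ≤ R := hs.2.trans hT.2
    nlinarith
  have := image_le_of_deriv_right_lt_deriv_boundary (f := fun r => - hh m v d r)
    (f' := fun r => - pp m v d r) (B := fun _ => -η) (B' := fun _ => 0) (a := 0) (b := T)
    h.ch.neg (by
      intro x hx
      rcases hx.1.eq_or_lt with h0 | h0
      · subst h0
        rw [h.p0]
        exact (h.dh0 hT.1).neg
      · exact (h.dh hm ⟨h0, hx.2⟩).neg.hasDerivWithinAt)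
    (by simp [hh]; exact hη1.le) (fun x => hasDerivAt_const _ _) (by
      intro x hx hxe
      have hxe' : hh m v d x = η := by simpa using hxe
      rcases hx.1.eq_or_lt with h0 | h0
      · subst h0
        have : hh m v d 0 = 1 := by simp [hh]
        linarith
      · have hQ := Q_lower hm h hqq x ⟨h0, hx.2⟩
        rw [hxe', hη, Real.log_exp] at hQ
        have hax : a ≤ m / (2 * x) + lam / 2 := by
          have hxR : x ≤ R := hx.2.le.trans hT.2
          have : a = m / (2 * R) + lam / 2 := by rw [ha]; field_simp
          rw [this]
          gcongr
        have h1 : a * (((1 + m/2) * |μ| + 1) / a) ≤ (m / (2 * x) + lam / 2) * (((1 + m/2) * |μ| + 1) / a) := by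
          gcongr
        rw [mul_div_cancel₀ _ ha0.ne'] at h1
        have h2 : -((1 + m/2) * |μ|) ≤ (1 + m/2) * μ := by
          have := neg_abs_le μ
          nlinarith
        linarith) hr
  linarith

lemma E_bound {m lam μ R η r0 : ℝ} (hm : 0 < m) (hη : 0 < η)  (hr0 : 0 < r0)
    {T : ℝ} (hT : T ≤ R) {v d : ℝ → ℝ} (h : Sys m lam μ T v d) (hq : ∀ s ∈ Icc 0 T, 0 ≤ m + lam * s)
    (hh' : ∀ r ∈ Icc 0 T, η ≤ hh m v d r) :
    ∀ r ∈ Icc r0 T, 1 + hh m v d r + (pp m v d r)^2 / (4 * hh m v d r) ≤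
      (1 + hh m v d r0 + (pp m v d r0)^2 / (4 * hh m v d r0)) *
        Real.exp ((1 + m / (4 * r0^2) * (1 + 1/η)) * (r - r0)) := by
  have hsub : Icc r0 T ⊆ Icc 0 T := Icc_subset_Icc_left hr0.le
  apply gron (fun r => 1 + hh m v d r + (pp m v d r)^2 / (4 * hh m v d r))
    (fun r => pp m v d r + m / (4 * r^2) * (pp m v d r / hh m v d r * (hh m v d r - 1)) -
      (m + lam * r) * (pp m v d r)^2 / (4 * r * (hh m v d r)^2)) r0 T
  · apply ((continuousOn_const.add h.ch).add _).mono hsub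
    exact (h.cp.pow 2).div (continuousOn_const.mul h.ch) (fun r hr => by have := h.pos r hr; positivity)
  · intro r hr
    have hr' : r ∈ Ioo 0 T := ⟨hr0.trans hr.1, hr.2⟩
    have h0 := hr'.1.ne'
    have h1 := (h.pos r ⟨hr'.1.le, hr'.2.le⟩).ne'
    have := ((h.dh hm hr').const_add 1).add (((h.dp hm hr').pow 2).div ((h.dh hm hr').const_mul 4)
      (by simpa using h1))
    refine this.congr_deriv ?_
    simp only [Pi.pow_apply]
    generalize hh m v d r = H at *
    generalize pp m v d r = p
    push_cast
    field_simp; ring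
  · intro r hr
    have hr' : r ∈ Ioo 0 T := ⟨hr0.trans hr.1, hr.2⟩
    have hrI : r ∈ Icc 0 T := ⟨hr'.1.le, hr'.2.le⟩
    have h1 := h.pos r hrI
    have h2 := hh' r hrI
    have h3 := hq r hrI
    have hr1 := hr'.1
    have hr2 := hr.1
    generalize hh m v d r = H at *
    generalize pp m v d r = p
    set E := 1 + H + p^2 / (4 * H) with hE
    have hpE : |p| ≤ E := by
      have : |p| ≤ H + p^2 / (4 * H) := by
        have e : H + p^2 / (4 * H) - |p| = (2 * H - |p|)^2 / (4 * H) := by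
          rw [← sq_abs p]; field_simp; ring
        have : 0 ≤ (2 * H - |p|)^2 / (4 * H) := by positivity
        linarith
      linarith
    have hE0 : 0 ≤ E := (abs_nonneg _).trans hpE
    have a1 : 0 ≤ (m + lam * r) * p^2 / (4 * r * H^2) := by positivity
    have a2 : p / H * (H - 1) ≤ E * (1 + 1/η) := by
      have e : p / H * (H - 1) = p * (1 - 1/H) := by field_simp
      rw [e]
      refine (le_abs_self _).trans ?_
      rw [abs_mul]
      have : |1 - 1/H| ≤ 1 + 1/η := by
        have b1 : 1/H ≤ 1/η := by gcongr
        have b2 : 0 < 1/H := by positivity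
        rw [abs_le]; constructor <;> linarith
      gcongr
    have a3 : m / (4 * r^2) * (p / H * (H - 1)) ≤ m / (4 * r0^2) * (E * (1 + 1/η)) := by
      calc _ ≤ m / (4 * r^2) * (E * (1 + 1/η)) := by gcongr
        _ ≤ _ := by gcongr
    have a4 := le_abs_self p
    nlinarith

lemma apriori {m lam μ R : ℝ} (hm : 0 < m) (hlam : lam < 0) (hR : 0 < R) (hq : 0 < m + lam * R) :
    ∃ v d, Sys m lam μ R v d := by
  obtain ⟨η, hη, hη1, hlow⟩ := h_lower (μ := μ) hm hlam hR hq
  obtain ⟨r0, hr0, vl, dl, hl⟩ := local_ex m lam μ hm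
  obtain ⟨Ml, ηl, hMl, -, hbl⟩ := hl.bdd hr0.le
  set C := 1 + m / (4 * r0^2) * (1 + 1/η) with hC
  have hC0 : 0 ≤ C := by positivity
  have hpl := hl.pos r0 ⟨hr0.le, le_rfl⟩
  set E := (1 + hh m vl dl r0 + (pp m vl dl r0)^2 / (4 * hh m vl dl r0)) * Real.exp (C * R) with hE
  have hE0 : 0 ≤ E := by positivity
  have agree : ∀ T, ∀ v d, Sys m lam μ T v d → ∀ r ∈ Icc 0 T, r ≤ r0 →
      uu m v d r = uu m vl dl r ∧ pp m v d r = pp m vl dl r ∧ hh m v d r = hh m vl dl r := by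
    intro T v d h r hr hrr
    obtain ⟨e1, e2⟩ := sys_unique hm hr.1 (h.mono hr.2) (hl.mono hrr) r ⟨hr.1, le_rfl⟩
    simp [hh, pp, uu, e1, e2]
  refine cont_ex m lam μ R (max Ml (max (2 * E) (E / r0))) η hm hR hη ?_ ?_ hη1
  · intro T hT v d h r hr
    refine ⟨?_, ?_, hlow T hT v d h r hr⟩
    all_goals
      rcases le_or_gt r r0 with hrr | hrr
      · obtain ⟨e1, e2, -⟩ := agree T v d h r hr hrr
        have := hbl r ⟨hr.1, hrr⟩
        first | rw [e1]; exact this.1.trans (le_max_left _ _)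
              | rw [e2]; exact this.2.1.trans (le_max_left _ _)
      · have hqq : ∀ s ∈ Icc 0 T, 0 ≤ m + lam * s := by
          intro s hs
          have : s ≤ R := hs.2.trans hT.2
          nlinarith
        have hb := E_bound hm hη hr0 hT.2 h hqq (hlow T hT v d h) r ⟨hrr.le, hr.2⟩
        obtain ⟨-, e2, e3⟩ := agree T v d h r0 ⟨hr0.le, hrr.le.trans hr.2⟩ le_rfl
        rw [e2, e3, ← hC] at hb
        have hbE : 1 + hh m v d r + (pp m v d r)^2 / (4 * hh m v d r) ≤ E := by
          refine hb.trans ?_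
          rw [hE]
          have : r ≤ R := hr.2.trans hT.2
          gcongr
          linarith
        have hp := h.pos r hr
        have hx : 0 ≤ (pp m v d r)^2 / (4 * hh m v d r) := by positivity
        first
        | have hu : |uu m v d r| ≤ E / r0 := by
            have e : uu m v d r = (hh m v d r - 1) / r := by
              unfold hh; field_simp [(hr0.trans hrr).ne']; ring
            rw [e, abs_div, abs_of_pos (hr0.trans hrr)]
            have : |hh m v d r - 1| ≤ E := by rw [abs_le]; constructor <;> linarith
            gcongr
          exact hu.trans ((le_max_right _ _).trans (le_max_right _ _))
        | have hu : |pp m v d r| ≤ 2 * E := by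
            have h1 : (pp m v d r)^2 / (4 * hh m v d r) ≤ E := by linarith
            rw [div_le_iff₀ (by positivity)] at h1
            apply abs_le_of_sq_le_sq _ (by positivity)
            have : hh m v d r ≤ E := by linarith
            nlinarith
          exact hu.trans ((le_max_left _ _).trans (le_max_right _ _))
  · have := (hbl 0 ⟨le_rfl, hr0.le⟩).1
    rw [hl.u0] at this
    exact this.trans (le_max_left _ _)

lemma glue {m lam μ R : ℝ} (hm : 0 < m) (hlam : lam < 0) (hR : 0 < R) (hq : m + lam * R = 0) :
    ∃ v d, ∀ T < R, Sys m lam μ T v d := by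
  have hex : ∀ T, ∃ v d, T ∈ Ioo 0 R → Sys m lam μ T v d := by
    intro T
    by_cases hT : T ∈ Ioo 0 R
    · obtain ⟨v, d, h⟩ := apriori (μ := μ) hm hlam hT.1 (by nlinarith [hT.2])
      exact ⟨v, d, fun _ => h⟩
    · exact ⟨0, 0, fun h => absurd h hT⟩
  choose v d h using hex
  let V : ℝ → ℝ := fun r => v ((r + R)/2) r
  let D : ℝ → ℝ := fun r => d ((r + R)/2) r
  have key : ∀ T ∈ Ioo 0 R, ∀ r ∈ Icc 0 T, V r = v T r ∧ D r = d T r := by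
    intro T hT r hr
    have hrR : r < R := hr.2.trans_lt hT.2
    have h1 := h ((r+R)/2) ⟨by linarith [hr.1], by linarith⟩
    exact sys_unique hm hr.1 (h1.mono (by linarith)) ((h T hT).mono hr.2) r ⟨hr.1, le_rfl⟩
  have main : ∀ T ∈ Ioo 0 R, Sys m lam μ T V D := by
    intro T hT
    have hS := h T hT
    have hV : EqOn V (v T) (Icc 0 T) := fun r hr => (key T hT r hr).1
    have hD : EqOn D (d T) (Icc 0 T) := fun r hr => (key T hT r hr).2
    have h0 : (0:ℝ) ∈ Icc 0 T := ⟨le_rfl, hT.1.le⟩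
    have hu : ∀ r ∈ Icc 0 T, uu m V D r = uu m (v T) (d T) r := by
      intro r hr; simp [uu, hV hr, hD hr]
    have hp : ∀ r ∈ Icc 0 T, pp m V D r = pp m (v T) (d T) r := by
      intro r hr; simp [pp, hu r hr, hD hr]
    refine ⟨hS.cv.congr hV, hS.cd.congr hD, (hV h0).trans hS.v0, (hD h0).trans hS.d0, ?_, ?_, ?_⟩
    · intro r hr
      have := hS.pos r hr
      simpa [hh, hu r hr] using this
    · intro r hr
      have hr' : r ∈ Icc 0 T := Ioo_subset_Icc_self hr
      rw [hu r hr', hp r hr']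
      exact (hS.dv r hr).congr_of_eventuallyEq
        (Filter.eventuallyEq_of_mem (Icc_mem_nhds hr.1 hr.2) hV)
    · intro r hr
      have hr' : r ∈ Icc 0 T := Ioo_subset_Icc_self hr
      rw [hu r hr', hp r hr', hD hr']
      exact (hS.dd r hr).congr_of_eventuallyEq
        (Filter.eventuallyEq_of_mem (Icc_mem_nhds hr.1 hr.2) hD)
  refine ⟨V, D, fun T hT => ?_⟩
  exact (main (max T (R/2)) ⟨by positivity, max_lt hT (by linarith)⟩).mono (le_max_left _ _)

lemma sol_of_sys {n : ℕ} {lam μ L : ℝ} {v d : ℝ → ℝ} (hm : 0 < (n:ℝ) - 1) (hL : 0 < L)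
    (hS : ∀ T < L, Sys ((n:ℝ) - 1) lam μ T v d) : IsSolOn n lam μ L (hh ((n:ℝ)-1) v d) := by
  set m := (n:ℝ) - 1 with hmdef
  have hS' : ∀ r ∈ Ioo 0 L, Sys m lam μ ((r+L)/2) v d ∧ r ∈ Ioo 0 ((r+L)/2) := fun r hr =>
    ⟨hS _ (by linarith [hr.2]), hr.1, by linarith [hr.2]⟩
  have hpos : ∀ r ∈ Ioo 0 L, 0 < hh m v d r := fun r hr =>
    (hS' r hr).1.pos r (Ioo_subset_Icc_self (hS' r hr).2)
  have dh : ∀ r ∈ Ioo 0 L, HasDerivAt (hh m v d) (pp m v d r) r := fun r hr =>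
    (hS' r hr).1.dh hm (hS' r hr).2
  have dp : ∀ r ∈ Ioo 0 L, HasDerivAt (pp m v d) (m * (hh m v d r - 1) / (2 * r ^ 2) +
      (pp m v d r) ^ 2 / (2 * hh m v d r) - (m + lam * r) * pp m v d r / (2 * r * hh m v d r)) r :=
    fun r hr => (hS' r hr).1.dp hm (hS' r hr).2
  have dh0 : HasDerivWithinAt (hh m v d) μ (Ici 0) 0 :=
    (hS (L/2) (by linarith)).dh0 (by linarith)
  have hp0 : pp m v d 0 = μ := (hS (L/2) (by linarith)).p0
  have chh : ContinuousOn (hh m v d) (Ioo 0 L) := fun r hr => (dh r hr).continuousAt.continuousWithinAt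
  have cpp : ContinuousOn (pp m v d) (Ioo 0 L) := fun r hr => (dp r hr).continuousAt.continuousWithinAt
  refine ⟨?_, ?_, ?_, by simp [hh], dh0.derivWithin (uniqueDiffOn_Ici 0 0 self_mem_Ici)⟩
  · have h1 : ContDiffOn ℝ 1 (pp m v d) (Ioo 0 L) := by
      rw [contDiffOn_one_iff_derivWithin isOpen_Ioo.uniqueDiffOn]
      refine ⟨fun r hr => (dp r hr).differentiableAt.differentiableWithinAt, ?_⟩
      have : ContinuousOn (fun r => m * (hh m v d r - 1) / (2 * r ^ 2) +
          (pp m v d r) ^ 2 / (2 * hh m v d r) - (m + lam * r) * pp m v d r / (2 * r * hh m v d r))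
          (Ioo 0 L) := by
        refine ContinuousOn.sub (ContinuousOn.add ?_ ?_) ?_
        · refine ContinuousOn.div (continuousOn_const.mul (chh.sub continuousOn_const)) (by fun_prop) ?_
          intro r hr; have := hr.1; positivity
        · refine ContinuousOn.div (cpp.pow 2) (continuousOn_const.mul chh) ?_
          intro r hr; have := hpos r hr; positivity
        · refine ContinuousOn.div (ContinuousOn.mul (by fun_prop) cpp)
            (ContinuousOn.mul (by fun_prop) chh) ?_
          intro r hr; have := hpos r hr; have := hr.1; positivity
      refine this.congr ?_
      intro r hr
      rw [derivWithin_of_isOpen isOpen_Ioo hr]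
      exact (dp r hr).deriv
    rw [show (2 : WithTop ℕ∞) = 1 + 1 by norm_num, contDiffOn_succ_iff_deriv_of_isOpen isOpen_Ioo]
    refine ⟨fun r hr => (dh r hr).differentiableAt.differentiableWithinAt, by simp, ?_⟩
    exact h1.congr fun r hr => (dh r hr).deriv
  · have hw : ∀ r ∈ Ico 0 L, HasDerivWithinAt (hh m v d) (pp m v d r) (Ico 0 L) r := by
      intro r hr
      rcases hr.1.eq_or_lt with h0 | h0
      · subst h0
        rw [hp0]
        exact dh0.mono Ico_subset_Ici_self
      · exact (dh r ⟨h0, hr.2⟩).hasDerivWithinAt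
    rw [contDiffOn_one_iff_derivWithin (uniqueDiffOn_Ico 0 L)]
    refine ⟨fun r hr => (hw r hr).differentiableWithinAt, ?_⟩
    have : ContinuousOn (pp m v d) (Ico 0 L) := by
      intro r hr
      have h1 := (hS ((r+L)/2) (by linarith [hr.2])).cp r ⟨hr.1, by linarith [hr.2]⟩
      refine h1.mono_of_mem_nhdsWithin ?_
      rw [mem_nhdsWithin]
      exact ⟨Iio ((r+L)/2), isOpen_Iio, by simp; linarith [hr.2], fun x hx => ⟨hx.2.1, hx.1.le⟩⟩
    exact this.congr fun r hr => (hw r hr).derivWithin (uniqueDiffOn_Ico 0 L r hr)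
  · intro r hr
    refine ⟨?_, hpos r hr⟩
    have e1 : deriv (hh m v d) r = pp m v d r := (dh r hr).deriv
    have e2 : deriv (deriv (hh m v d)) r = deriv (pp m v d) r :=
      Filter.EventuallyEq.deriv_eq
        (Filter.eventuallyEq_of_mem (isOpen_Ioo.mem_nhds hr) fun s hs => (dh s hs).deriv)
    rw [(dp r hr).deriv] at e2
    rw [e2, e1]
    have h1 := (hpos r hr).ne'
    have h2 := hr.1.ne'
    generalize hh m v d r = H at *
    generalize pp m v d r = p
    field_simp; ring

lemma sys_of_sol {n : ℕ} {lam μ L : ℝ} {g : ℝ → ℝ} (hm : 0 < (n:ℝ) - 1) (hL : 0 < L)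
    (hg : IsSolOn n lam μ L g) : ∃ v d, (∀ T < L, Sys ((n:ℝ) - 1) lam μ T v d) ∧
      ∀ r, hh ((n:ℝ)-1) v d r = g r := by
  obtain ⟨hg2, hg1, hode, hg0, hgμ⟩ := hg
  set m := (n:ℝ) - 1 with hmdef
  have hκ : 0 < 1 + m/2 := by linarith
  obtain ⟨hdiff, hcont⟩ := (contDiffOn_one_iff_derivWithin (uniqueDiffOn_Ico 0 L)).1 hg1
  set p := derivWithin g (Ico 0 L) with hp
  have hpd : ∀ r ∈ Ioo 0 L, p r = deriv g r := by
    intro r hr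
    exact derivWithin_of_mem_nhds (Ico_mem_nhds hr.1 hr.2)
  have hIco : Ico 0 L ∈ 𝓝[Ici 0] (0:ℝ) := by
    rw [mem_nhdsWithin]
    exact ⟨Iio L, isOpen_Iio, hL, fun x hx => ⟨hx.2, hx.1⟩⟩
  have hd0 : HasDerivWithinAt g (p 0) (Ici 0) 0 :=
    ((hdiff 0 ⟨le_rfl, hL⟩).hasDerivWithinAt).mono_of_mem_nhdsWithin hIco
  have hp0 : p 0 = μ := by
    rw [← hgμ, hd0.derivWithin (uniqueDiffOn_Ici 0 0 self_mem_Ici)]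
  rw [hp0] at hd0
  let u : ℝ → ℝ := fun r => if r = 0 then μ else (g r - 1)/r
  have hu0 : u 0 = μ := by simp [u]
  have hur : ∀ r, r ≠ 0 → u r = (g r - 1)/r := fun r hr => by simp [u, hr]
  have hug : ∀ r, 1 + r * u r = g r := by
    intro r
    by_cases hr : r = 0
    · simp [hr, hg0]
    · rw [hur r hr]; field_simp; ring
  have hgd : ∀ r ∈ Ioo 0 L, HasDerivAt g (p r) r := by
    intro r hr
    rw [hpd r hr]
    exact ((hdiff r ⟨hr.1.le, hr.2⟩).differentiableAt (Ico_mem_nhds hr.1 hr.2)).hasDerivAt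
  have hud : ∀ r ∈ Ioo 0 L, HasDerivAt u ((p r - u r)/r) r := by
    intro r hr
    have h0 := hr.1.ne'
    have h1 := ((hgd r hr).sub_const 1).div (hasDerivAt_id r) h0
    refine (h1.congr_deriv ?_).congr_of_eventuallyEq ?_
    · rw [hur r h0]; simp only [id]; field_simp
    · filter_upwards [lt_mem_nhds hr.1] with x hx
      exact hur x (ne_of_gt hx)
  have hpdd : ∀ r ∈ Ioo 0 L, HasDerivAt p (deriv (deriv g) r) r := by
    intro r hr
    have h1 : ContDiffOn ℝ 1 (deriv g) (Ioo 0 L) := hg2.deriv_of_isOpen isOpen_Ioo (by norm_num)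
    have h2 := ((h1.differentiableOn (by norm_num)) r hr).differentiableAt (isOpen_Ioo.mem_nhds hr)
    exact h2.hasDerivAt.congr_of_eventuallyEq
      (Filter.eventuallyEq_of_mem (isOpen_Ioo.mem_nhds hr) hpd)
  have huc : ContinuousOn u (Ico 0 L) := by
    intro r hr
    rcases hr.1.eq_or_lt with h0 | h0
    · subst h0
      rw [hasDerivWithinAt_iff_tendsto_slope] at hd0
      have h1 : Tendsto u (𝓝[Ici 0 \ {0}] 0) (𝓝 (u 0)) := by
        rw [hu0]
        refine hd0.congr' ?_
        filter_upwards [self_mem_nhdsWithin] with x hx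
        have hx' : x ≠ 0 := hx.2
        rw [hur x hx', slope_def_field, hg0, sub_zero]
      have h2 : ContinuousWithinAt u (Ici 0 \ {0}) 0 := h1
      exact (continuousWithinAt_sdiff_self.1 h2).mono Ico_subset_Ici_self
    · exact (hud r ⟨h0, hr.2⟩).continuousAt.continuousWithinAt
  let d : ℝ → ℝ := fun r => p r - u r
  let v : ℝ → ℝ := fun r => u r + (p r - u r)/(1 + m/2)
  have huu : ∀ r, uu m v d r = u r := fun r => by simp [uu, v, d]
  have hpp : ∀ r, pp m v d r = p r := fun r => by simp [pp, huu, d]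
  have hhh : ∀ r, hh m v d r = g r := fun r => by simp only [hh, huu, hug]
  refine ⟨v, d, ?_, hhh⟩
  intro T hT
  have hsub : Icc 0 T ⊆ Ico 0 L := fun x hx => ⟨hx.1, hx.2.trans_lt hT⟩
  have hode' : ∀ r ∈ Ioo 0 L, deriv (deriv g) r =
      -(1 + m/2)/r * d r + Fn m lam r (u r) (p r) + (p r - u r)/r := by
    intro r hr
    obtain ⟨h1, h2⟩ := hode r hr
    rw [← hpd r hr] at h1
    have h0 := hr.1.ne'
    have h2' := h2.ne'
    unfold Fn
    rw [hug]
    simp only [d]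
    rw [hur r h0]
    have : deriv (deriv g) r = (m * g r * (g r - 1) + r * p r * (r * p r - lam * r - m)) /
        (2 * r^2 * g r) := by
      rw [eq_div_iff (by positivity)]; linarith
    rw [this]
    generalize g r = H at *
    generalize p r = P at *
    field_simp; ring
  have hdd : ∀ r ∈ Ioo 0 L, HasDerivAt d (-(1 + m/2)/r * d r + Fn m lam r (u r) (p r)) r := by
    intro r hr
    refine ((hpdd r hr).sub (hud r hr)).congr_deriv ?_
    rw [hode' r hr]; ring
  refine ⟨(huc.add ((hcont.sub huc).div_const _)).mono hsub, (hcont.sub huc).mono hsub,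
    by simp [v, hu0, hp0], by simp [d, hu0, hp0], ?_, ?_, ?_⟩
  · intro r hr
    rw [hhh]
    rcases hr.1.eq_or_lt with h0 | h0
    · rw [← h0, hg0]; norm_num
    · exact (hode r ⟨h0, hr.2.trans_lt hT⟩).2
  · intro r hr
    have hr' : r ∈ Ioo 0 L := ⟨hr.1, hr.2.trans hT⟩
    rw [huu, hpp]
    refine ((hud r hr').add ((hdd r hr').div_const (1 + m/2))).congr_deriv ?_
    have h0 := hr.1.ne'
    simp only [d]
    field_simp; ring
  · intro r hr
    rw [huu, hpp]
    exact hdd r ⟨hr.1, hr.2.trans hT⟩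

theorem existence_uniqueness_neg_lambda (lam μ₁ : ℝ) (n : ℕ) (hlam : lam < 0)
    (hn2 : 2 ≤ n) (hn4 : n ≤ 4) :
    ∃ L : ℝ, -((n : ℝ) - 1) / lam ≤ L ∧
      ∃ h : ℝ → ℝ, IsSolOn n lam μ₁ L h ∧
        ∀ g : ℝ → ℝ, IsSolOn n lam μ₁ L g → Set.EqOn g h (Set.Ico 0 L) := by
  have hm : 0 < (n:ℝ) - 1 := by
    have : (2:ℝ) ≤ n := by exact_mod_cast hn2
    linarith
  have hL : 0 < -((n : ℝ) - 1) / lam := div_pos_of_neg_of_neg (by linarith) hlam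
  obtain ⟨v, d, hS⟩ := glue (μ := μ₁) hm hlam hL (by field_simp [hlam.ne]; ring)
  refine ⟨_, le_rfl, hh ((n:ℝ)-1) v d, sol_of_sys hm hL hS, ?_⟩
  intro g hg r hr
  obtain ⟨v', d', hS', hg'⟩ := sys_of_sol hm hL hg
  obtain ⟨e1, e2⟩ := sys_unique hm hr.1 (hS' r hr.2) (hS r hr.2) r ⟨hr.1, le_rfl⟩
  rw [← hg' r]
  simp [hh, uu, e1, e2]
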